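/- Let L be a complete orthomodular lattice and let z ∈ L satisfy ⊥ < z < ⊤. Then the following are equivalent: (a) for all x, y ∈ L there exists u ∈ L such that δ_B(u) = δ_B(x) ⊓ δ_B(y) for every nontrivial complete atomic Boolean subalgebra B of L; (b) every element of L equals ⊥, z, zᗮ, or ⊤. -/

import Mathlib

/-- The daseinisation of `x` to a subset `B` of a complete lattice:
`δ_B(x) := sInf {y ∈ B | x ≤ y}`. -/
def das {L : Type*} [CompleteLattice L] (B : Set L) (x : L) : L :=
  sInf {y ∈ B | x ≤ y}

/-- `a` is an atom of the subset `C`: `a ∈ C`, `a ≠ ⊥`, and every element of `C`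
strictly below `a` is `⊥`. -/
def IsAtomOf {L : Type*} [CompleteLattice L] (C : Set L) (a : L) : Prop :=
  a ∈ C ∧ a ≠ ⊥ ∧ ∀ y ∈ C, y < a → y = ⊥

/-- `B` is a nontrivial complete atomic Boolean subalgebra of `L` (with respect to
the orthocomplementation `oc`). -/
def IsCABS {L : Type*} [CompleteLattice L] (oc : L → L) (B : Set L) : Prop :=
  (∀ S ⊆ B, sInf S ∈ B) ∧ (∀ S ⊆ B, sSup S ∈ B) ∧
  (∀ b ∈ B, oc b ∈ B) ∧
  (∀ p ∈ B, ∀ q ∈ B, ∀ r ∈ B,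
    p ⊓ (q ⊔ r) = (p ⊓ q) ⊔ (p ⊓ r) ∧ p ⊔ (q ⊓ r) = (p ⊔ q) ⊓ (p ⊔ r)) ∧
  (∀ b ∈ B, b = sSup {a | IsAtomOf B a ∧ a ≤ b}) ∧
  (∃ b ∈ B, b ≠ ⊥ ∧ b ≠ ⊤)

/-!
Each nontrivial `w` gives the subalgebra `{⊥, w, wᗮ, ⊤}`, which contains `w`, so daseinisation
reflects the order at every `x ≠ ⊥`. Hence, if `x` and `y` are disjoint and nonzero, then the only
`u` that can represent `δ(x) ⊓ δ(y)` is `⊥`. Read in `{⊥, w, wᗮ, ⊤}`, this says that one of `x`, `y`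
lies below `w` and the other below `wᗮ`. For the pair `(x, wᗮ)` with `x ≤ w`, tested against `x`
itself, it gives `wᗮ ≤ xᗮ`; for the pair `(z, zᗮ)` it then squeezes an arbitrary nontrivial `w` to
be `z` or `zᗮ`.
-/

section Daseinisation

variable {L : Type*} [CompleteLattice L] {B : Set L} {x y : L}

theorem le_das : x ≤ das B x :=
  le_sInf fun _ h => h.2

theorem das_of_mem (hx : x ∈ B) : das B x = x :=
  le_antisymm (sInf_le ⟨hx, le_rfl⟩) le_das

theorem das_ne_bot (hx : x ≠ ⊥) : das B x ≠ ⊥ :=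
  ne_bot_of_le_ne_bot hx le_das

end Daseinisation

namespace IsCABS

variable {L : Type*} [CompleteLattice L] {oc : L → L} {B : Set L}

theorem sInf_mem (hB : IsCABS oc B) {S : Set L} (hS : S ⊆ B) : sInf S ∈ B :=
  hB.1 S hS

theorem sSup_mem (hB : IsCABS oc B) {S : Set L} (hS : S ⊆ B) : sSup S ∈ B :=
  hB.2.1 S hS

theorem compl_mem (hB : IsCABS oc B) {b : L} (hb : b ∈ B) : oc b ∈ B :=
  hB.2.2.1 b hb

theorem exists_mem_ne_bot_ne_top (hB : IsCABS oc B) : ∃ b ∈ B, b ≠ ⊥ ∧ b ≠ ⊤ :=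
  hB.2.2.2.2.2

theorem bot_mem (hB : IsCABS oc B) : ⊥ ∈ B := by
  simpa only [sSup_empty] using hB.sSup_mem (Set.empty_subset B)

theorem top_mem (hB : IsCABS oc B) : ⊤ ∈ B := by
  simpa only [sInf_empty] using hB.sInf_mem (Set.empty_subset B)

theorem das_mem (hB : IsCABS oc B) (x : L) : das B x ∈ B :=
  hB.sInf_mem (Set.sep_subset B _)

end IsCABS

/-- The set `{⊥, a, c, ⊤}`. When `c` is the orthocomplement of a nontrivial `a`, it is the Boolean
subalgebra generated by `a`. -/
def fourBlock {L : Type*} [LE L] [BoundedOrder L] (a c : L) : Set L :=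
  {⊥, a, c, ⊤}

section FourBlock

section Membership

variable {L : Type*} [LE L] [BoundedOrder L] {a c x : L}

theorem mem_fourBlock : x ∈ fourBlock a c ↔ x = ⊥ ∨ x = a ∨ x = c ∨ x = ⊤ :=
  Iff.rfl

theorem left_mem_fourBlock (a c : L) : a ∈ fourBlock a c :=
  .inr (.inl rfl)

theorem fourBlock_comm (a c : L) : fourBlock a c = fourBlock c a :=
  congrArg (insert ⊥) (Set.insert_comm a c {⊤})

end Membership

section Lattice

variable {L : Type*} [Lattice L] [BoundedOrder L] {a c : L}

theorem infClosed_fourBlock (h : Disjoint a c) : InfClosed (fourBlock a c) := by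
  rintro p (rfl | rfl | rfl | rfl) q (rfl | rfl | rfl | rfl) <;>
    simp [mem_fourBlock, h.eq_bot, h.symm.eq_bot]

theorem supClosed_fourBlock (h : Codisjoint a c) : SupClosed (fourBlock a c) := by
  rintro p (rfl | rfl | rfl | rfl) q (rfl | rfl | rfl | rfl) <;>
    simp [mem_fourBlock, h.eq_top, h.symm.eq_top]

theorem distrib_of_mem_fourBlock (h : IsCompl a c) {p q r : L} (hp : p ∈ fourBlock a c)
    (hq : q ∈ fourBlock a c) (hr : r ∈ fourBlock a c) :
    p ⊓ (q ⊔ r) = p ⊓ q ⊔ p ⊓ r ∧ p ⊔ q ⊓ r = (p ⊔ q) ⊓ (p ⊔ r) := by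
  rcases hp with rfl | rfl | rfl | rfl <;> rcases hq with rfl | rfl | rfl | rfl <;>
    rcases hr with rfl | rfl | rfl | rfl <;>
    simp [h.inf_eq_bot, h.symm.inf_eq_bot, h.sup_eq_top, h.symm.sup_eq_top]

theorem eq_and_eq_or_of_disjoint_of_mem_fourBlock {p q : L} (hp : p ∈ fourBlock a c)
    (hq : q ∈ fourBlock a c) (hp₀ : p ≠ ⊥) (hq₀ : q ≠ ⊥) (hpq : Disjoint p q) :
    p = a ∧ q = c ∨ p = c ∧ q = a := by
  rcases hp with rfl | rfl | rfl | rfl <;> rcases hq with rfl | rfl | rfl | rfl <;> simp_all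

end Lattice

section CompleteLattice

variable {L : Type*} [CompleteLattice L] {a c : L}

theorem isAtomOf_fourBlock_left (h : Disjoint a c) (ha : a ≠ ⊥) :
    IsAtomOf (fourBlock a c) a := by
  refine ⟨left_mem_fourBlock a c, ha, ?_⟩
  rintro y (rfl | rfl | rfl | rfl) hy
  · rfl
  · exact absurd hy (lt_irrefl y)
  · exact h.symm.eq_bot_of_le hy.le
  · exact absurd hy not_top_lt

theorem isAtomOf_fourBlock_right (h : Disjoint a c) (hc : c ≠ ⊥) :
    IsAtomOf (fourBlock a c) c :=
  fourBlock_comm c a ▸ isAtomOf_fourBlock_left h.symm hc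

theorem eq_sSup_isAtomOf_fourBlock (h : IsCompl a c) (ha : a ≠ ⊥) (hc : c ≠ ⊥) {b : L}
    (hb : b ∈ fourBlock a c) : b = sSup {d | IsAtomOf (fourBlock a c) d ∧ d ≤ b} := by
  have atom_a := isAtomOf_fourBlock_left h.disjoint ha
  have atom_c := isAtomOf_fourBlock_right h.disjoint hc
  refine le_antisymm ?_ (sSup_le fun _ hd => hd.2)
  rcases hb with rfl | rfl | rfl | rfl
  · exact bot_le
  · exact le_sSup ⟨atom_a, le_rfl⟩
  · exact le_sSup ⟨atom_c, le_rfl⟩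
  · exact h.sup_eq_top.ge.trans
      (sup_le (le_sSup ⟨atom_a, le_top⟩) (le_sSup ⟨atom_c, le_top⟩))

end CompleteLattice

end FourBlock

section Complement

variable {L : Type*} [Lattice L] [BoundedOrder L]

theorem right_ne_bot_of_isCompl {x y : L} (h : IsCompl x y) (hx : x ≠ ⊤) : y ≠ ⊥ :=
  fun hy => hx (eq_top_of_isCompl_bot (hy ▸ h))

theorem compl_mem_fourBlock {oc : L → L} (hc : ∀ x, IsCompl x (oc x))
    (hinv : Function.Involutive oc) {w b : L} (hb : b ∈ fourBlock w (oc w)) :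
    oc b ∈ fourBlock w (oc w) := by
  have oc_bot : oc ⊥ = ⊤ := eq_top_of_bot_isCompl (hc ⊥)
  have oc_top : oc ⊤ = ⊥ := eq_bot_of_top_isCompl (hc ⊤)
  rcases hb with rfl | rfl | rfl | rfl <;> simp [mem_fourBlock, oc_bot, oc_top, hinv _]

end Complement

section Representable

variable {L : Type*} [CompleteLattice L] {oc : L → L}

theorem isCABS_fourBlock (hc : ∀ x, IsCompl x (oc x)) (hinv : Function.Involutive oc) {w : L}
    (hw₀ : w ≠ ⊥) (hw₁ : w ≠ ⊤) : IsCABS oc (fourBlock w (oc w)) := by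
  have finite : (fourBlock w (oc w)).Finite := Set.toFinite {⊥, w, oc w, ⊤}
  exact ⟨fun _ hS => (infClosed_fourBlock (hc w).disjoint).sInf_mem (finite.subset hS)
      (by simp [mem_fourBlock]) hS,
    fun _ hS => (supClosed_fourBlock (hc w).codisjoint).sSup_mem (finite.subset hS)
      (by simp [mem_fourBlock]) hS,
    fun _ => compl_mem_fourBlock hc hinv,
    fun _ hp _ hq _ hr => distrib_of_mem_fourBlock (hc w) hp hq hr,
    fun _ => eq_sSup_isAtomOf_fourBlock (hc w) hw₀ (right_ne_bot_of_isCompl (hc w) hw₁),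
    w, left_mem_fourBlock w (oc w), hw₀, hw₁⟩

theorem le_of_forall_das_le (hc : ∀ x, IsCompl x (oc x)) (hinv : Function.Involutive oc) {u x : L}
    (hx : x ≠ ⊥) (h : ∀ B, IsCABS oc B → das B u ≤ das B x) : u ≤ x := by
  obtain rfl | hx₁ := eq_or_ne x ⊤
  · exact le_top
  calc u ≤ das (fourBlock x (oc x)) u := le_das
    _ ≤ das (fourBlock x (oc x)) x := h _ (isCABS_fourBlock hc hinv hx hx₁)
    _ = x := das_of_mem (left_mem_fourBlock x (oc x))

/-- Closure under meets of the families `B ↦ δ_B(x)`, indexed by all nontrivial complete atomic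
Boolean subalgebras `B`: one `u` has to represent the meet for every `B` at once. -/
def DasInfRepresentable (oc : L → L) : Prop :=
  ∀ x y : L, ∃ u : L, ∀ B : Set L, IsCABS oc B → das B u = das B x ⊓ das B y

namespace DasInfRepresentable

theorem disjoint_das (H : DasInfRepresentable oc) (hc : ∀ x, IsCompl x (oc x))
    (hinv : Function.Involutive oc) {x y : L} (hx : x ≠ ⊥) (hy : y ≠ ⊥) (hxy : Disjoint x y)
    {B : Set L} (hB : IsCABS oc B) : Disjoint (das B x) (das B y) := by
  obtain ⟨u, hu⟩ := H x y
  have hux : u ≤ x := le_of_forall_das_le hc hinv hx fun B hB => (hu B hB).trans_le inf_le_left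
  have huy : u ≤ y := le_of_forall_das_le hc hinv hy fun B hB => (hu B hB).trans_le inf_le_right
  have hu₀ : u = ⊥ := le_bot_iff.1 (hxy hux huy)
  rw [disjoint_iff, ← hu B hB, hu₀, das_of_mem hB.bot_mem]

theorem le_and_le_compl_or (H : DasInfRepresentable oc) (hc : ∀ x, IsCompl x (oc x))
    (hinv : Function.Involutive oc) {x y w : L} (hx : x ≠ ⊥) (hy : y ≠ ⊥) (hxy : Disjoint x y)
    (hw₀ : w ≠ ⊥) (hw₁ : w ≠ ⊤) : x ≤ w ∧ y ≤ oc w ∨ x ≤ oc w ∧ y ≤ w := by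
  have hB := isCABS_fourBlock hc hinv hw₀ hw₁
  have hdisj := H.disjoint_das hc hinv hx hy hxy hB
  obtain ⟨hxw, hyw⟩ | ⟨hxw, hyw⟩ := eq_and_eq_or_of_disjoint_of_mem_fourBlock
    (hB.das_mem x) (hB.das_mem y) (das_ne_bot hx) (das_ne_bot hy) hdisj
  · exact .inl ⟨le_das.trans_eq hxw, le_das.trans_eq hyw⟩
  · exact .inr ⟨le_das.trans_eq hxw, le_das.trans_eq hyw⟩

theorem antitone_compl (H : DasInfRepresentable oc) (hc : ∀ x, IsCompl x (oc x))
    (hinv : Function.Involutive oc) : Antitone oc := by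
  intro x w hxw
  obtain rfl | hx₀ := eq_or_ne x ⊥
  · exact le_top.trans_eq (eq_top_of_bot_isCompl (hc ⊥)).symm
  obtain rfl | hw₁ := eq_or_ne w ⊤
  · exact (eq_bot_of_top_isCompl (hc ⊤)).trans_le bot_le
  have hdisj : Disjoint x (oc w) := (hc w).disjoint.mono_left hxw
  have hw' : oc w ≠ ⊥ := right_ne_bot_of_isCompl (hc w) hw₁
  have hx₁ : x ≠ ⊤ := ne_top_of_le_ne_top hw₁ hxw
  obtain ⟨-, h⟩ | ⟨h, -⟩ := H.le_and_le_compl_or hc hinv hx₀ hw' hdisj hx₀ hx₁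
  · exact h
  · exact absurd ((hc x).disjoint.eq_bot_of_le h) hx₀

theorem mem_fourBlock (H : DasInfRepresentable oc) (hc : ∀ x, IsCompl x (oc x))
    (hinv : Function.Involutive oc) {z : L} (hz₀ : z ≠ ⊥) (hz₁ : z ≠ ⊤) (w : L) :
    w ∈ fourBlock z (oc z) := by
  have anti := H.antitone_compl hc hinv
  obtain rfl | hw₀ := eq_or_ne w ⊥
  · exact .inl rfl
  obtain rfl | hw₁ := eq_or_ne w ⊤
  · exact .inr (.inr (.inr rfl))
  obtain ⟨hzw, hzw'⟩ | ⟨hzw, hzw'⟩ :=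
    H.le_and_le_compl_or hc hinv hz₀ (right_ne_bot_of_isCompl (hc z) hz₁) (hc z).disjoint hw₀ hw₁
  · have oc_eq : oc w = oc z := le_antisymm (anti hzw) hzw'
    exact .inr (.inl (hinv.injective oc_eq))
  · have hwz : w ≤ oc z := (hinv w).ge.trans (anti hzw)
    exact .inr (.inr (.inl (le_antisymm hwz hzw')))

end DasInfRepresentable

theorem IsCABS.eq_univ_of_forall_mem_fourBlock {B : Set L} (hB : IsCABS oc B)
    (hinv : Function.Involutive oc) {z : L} (hL : ∀ w, w ∈ fourBlock z (oc z)) :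
    B = Set.univ := by
  have hz : z ∈ B := by
    obtain ⟨b, hb, hb₀, hb₁⟩ := hB.exists_mem_ne_bot_ne_top
    rcases hL b with rfl | rfl | rfl | rfl
    · exact absurd rfl hb₀
    · exact hb
    · exact hinv z ▸ hB.compl_mem hb
    · exact absurd rfl hb₁
  refine Set.eq_univ_of_forall fun w => ?_
  rcases hL w with rfl | rfl | rfl | rfl
  exacts [hB.bot_mem, hz, hB.compl_mem hz, hB.top_mem]

theorem dasInfRepresentable_of_forall_mem_fourBlock (hinv : Function.Involutive oc) {z : L}
    (hL : ∀ w, w ∈ fourBlock z (oc z)) : DasInfRepresentable oc := by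
  refine fun x y => ⟨x ⊓ y, fun B hB => ?_⟩
  have das_eq (w : L) : das B w = w :=
    das_of_mem (hB.eq_univ_of_forall_mem_fourBlock hinv hL ▸ Set.mem_univ w)
  simp only [das_eq]

end Representable

theorem das_inf_representable_iff_general {L : Type*} [CompleteLattice L] (oc : L → L)
    (h_inf : ∀ x : L, x ⊓ oc x = ⊥) (h_sup : ∀ x : L, x ⊔ oc x = ⊤)
    (h_inv : ∀ x : L, oc (oc x) = x) (z : L) (hz1 : ⊥ < z) (hz2 : z < ⊤) :
    (∀ x y : L, ∃ u : L, ∀ B : Set L, IsCABS oc B → das B u = das B x ⊓ das B y) ↔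
    (∀ w : L, w = ⊥ ∨ w = z ∨ w = oc z ∨ w = ⊤) := by
  have hc (x : L) : IsCompl x (oc x) := IsCompl.of_eq (h_inf x) (h_sup x)
  exact ⟨fun H => DasInfRepresentable.mem_fourBlock H hc h_inv hz1.ne' hz2.ne,
    dasInfRepresentable_of_forall_mem_fourBlock h_inv⟩

/-- Every meet of two daseinised elements is itself the daseinisation of some
element (uniformly over all nontrivial complete atomic Boolean subalgebras) iff
`L = {⊥, z, zᗮ, ⊤}`. -/
theorem das_inf_representable_iff {L : Type*} [CompleteLattice L] (oc : L → L)
    (h_inf : ∀ x : L, x ⊓ oc x = ⊥) (h_sup : ∀ x : L, x ⊔ oc x = ⊤)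
    (h_anti : ∀ x y : L, x ≤ y → oc y ≤ oc x) (h_inv : ∀ x : L, oc (oc x) = x)
    (h_om : ∀ x y : L, x ≤ y → y = x ⊔ (y ⊓ oc x))
    (z : L) (hz1 : ⊥ < z) (hz2 : z < ⊤) :
    (∀ x y : L, ∃ u : L, ∀ B : Set L, IsCABS oc B → das B u = das B x ⊓ das B y) ↔
    (∀ w : L, w = ⊥ ∨ w = z ∨ w = oc z ∨ w = ⊤) :=
  das_inf_representable_iff_general oc h_inf h_sup h_inv z hz1 hz2
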